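/- arXiv:2001.02308 — 3 statements merged into one kernel-verified Lean document; each statement's English description precedes it below -/
import Mathlib

section
/- Let (A,[·,·],α,β) be a regular BiHom-Lie algebra, V a vector space with two commuting bijective linear maps φ, ψ : V → V, and ρ : A → gl(V) a linear map. Then (V,ρ,φ,ψ) is a representation of (A,[·,·],α,β) if and only if (A ⊕ V, [·,·]_ρ, α+φ, β+ψ) is a BiHom-Lie algebra, where [x+u, y+v]_ρ = [x,y] + ρ(x)v − ρ(α⁻¹β(y))φψ⁻¹(u), (α+φ)(x+u) = α(x)+φ(u), and (β+ψ)(x+u) = β(x)+ψ(u) for all x,y ∈ A, u,v ∈ V. -/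
section Defs

variable (K : Type*) [Field K]
variable {A V : Type*} [AddCommGroup A] [Module K A] [AddCommGroup V] [Module K V]

/-- `f : A → A → V` is bilinear over `K`. -/
def IsBilin (f : A → A → V) : Prop :=
  (∀ y, IsLinearMap K fun x => f x y) ∧ (∀ x, IsLinearMap K fun y => f x y)

/-- `b` is a Lie bracket on `A`. -/
def IsLieBracket (b : A → A → A) : Prop :=
  IsBilin K b ∧ (∀ x y, b x y = - b y x) ∧
    (∀ x y z, b x (b y z) + b y (b z x) + b z (b x y) = 0)

/-- `(A, b, t)` is a (left) post-Lie algebra. -/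
def IsPostLie (b t : A → A → A) : Prop :=
  IsLieBracket K b ∧ IsBilin K t ∧
    (∀ x y z, t x (b y z) = b (t x y) z + b y (t x z)) ∧
    (∀ x y z, t (b x y) z =
      (t x (t y z) - t (t x y) z) - (t y (t x z) - t (t y x) z))

/-- `ρ` is a representation of the Lie algebra `(A, b)` on `V`. -/
def IsLieRep (b : A → A → A) (ρ : A → V → V) : Prop :=
  (∀ x, IsLinearMap K (ρ x)) ∧ (∀ v, IsLinearMap K fun x => ρ x v) ∧
    (∀ x y v, ρ (b x y) v = ρ x (ρ y v) - ρ y (ρ x v))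

/-- `(A, b, α, β)` is a BiHom-Lie algebra. -/
def IsBiHomLie (b : A → A → A) (α β : A → A) : Prop :=
  IsBilin K b ∧ IsLinearMap K α ∧ IsLinearMap K β ∧
    (∀ x, α (β x) = β (α x)) ∧
    (∀ x y, α (b x y) = b (α x) (α y)) ∧
    (∀ x y, β (b x y) = b (β x) (β y)) ∧
    (∀ x y, b (β x) (α y) = - b (β y) (α x)) ∧
    (∀ x y z, b (β (β x)) (b (β y) (α z)) + b (β (β y)) (b (β z) (α x)) +
        b (β (β z)) (b (β x) (α y)) = 0)

/-- `(V, ρ, φ, ψ)` is a representation of the BiHom-Lie algebra `(A, b, α, β)`. -/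
def IsBiHomRep (b : A → A → A) (α β : A → A) (ρ : A → V → V) (φ ψ : V → V) : Prop :=
  IsLinearMap K φ ∧ IsLinearMap K ψ ∧ (∀ v, φ (ψ v) = ψ (φ v)) ∧
    (∀ x, IsLinearMap K (ρ x)) ∧ (∀ v, IsLinearMap K fun x => ρ x v) ∧
    (∀ x v, ρ (α x) (φ v) = φ (ρ x v)) ∧
    (∀ x v, ρ (β x) (ψ v) = ψ (ρ x v)) ∧
    (∀ x y v, ρ (b (β x) y) (ψ v) = ρ (α (β x)) (ρ y v) - ρ (β y) (ρ (α x) v))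

/-- `(A, b, t, α, β)` is a (left) BiHom-post-Lie algebra. -/
def IsBiHomPostLie (b t : A → A → A) (α β : A → A) : Prop :=
  IsBiHomLie K b α β ∧ IsBilin K t ∧
    (∀ x y, α (t x y) = t (α x) (α y)) ∧
    (∀ x y, β (t x y) = t (β x) (β y)) ∧
    (∀ x y z, t (α (β x)) (b y z) = b (t (β x) y) (β z) + b (β y) (t (α x) z)) ∧
    (∀ x y z, t (b (β x) (α y)) (β z) =
      (t (α (β x)) (t (α y) z) - t (t (β x) (α y)) (β z)) -
      (t (α (β y)) (t (α x) z) - t (t (β y) (α x)) (β z)))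

/-- `(V, bv, ρ, φ, ψ)` is an `A`-module `K`-algebra over the BiHom-Lie algebra
`(A, b, α, β)`. -/
def IsModuleKAlgebra (b : A → A → A) (α β : A → A) (bv : V → V → V)
    (ρ : A → V → V) (φ ψ : V → V) : Prop :=
  IsBiHomLie K bv φ ψ ∧ IsBiHomRep K b α β ρ φ ψ ∧
    (∀ x u v, ρ (α (β x)) (bv u v) = bv (ρ (β x) u) (ψ v) + bv (ψ u) (ρ (α x) v))

end Defs

/-!
Write the bracket on `A × V` as `[x + u, y + v] = [x, y] + ρ(x)v - σ(y)u`, with `σ` a second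
bilinear action. Testing an axiom on pairs with one component zero decouples it: each of `α + φ`,
`β + ψ` preserves the bracket iff it preserves `[·,·]`, `ρ` and `σ`; skew-symmetry says
`σ(α(x))ψ(v) = ρ(β(x))φ(v)`; and the coefficient of the third vector `w` in the Jacobi identity is
`ρ(β²(x))ρ(β(y))φ(w) - ρ(β²(y))ρ(β(x))φ(w) - σ([β(x), α(y)])ψ²(w)`. Skew-symmetry forces
`σ(y)u = ρ(α⁻¹β(y))φψ⁻¹(u)`, and for this `σ` and `x = α(x')` the vanishing of that coefficient is
the representation identity at `β(x')`, `β(y)`, `φ(w)`.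
-/

open Function (Surjective)

section Bracket

variable {R A V : Type*} [CommRing R] [AddCommGroup A] [Module R A] [AddCommGroup V] [Module R V]
variable {b : A → A → A} {ρ σ : A →ₗ[R] V →ₗ[R] V}

/-- The bracket `[x + u, y + v] = [x, y] + ρ(x)v - σ(y)u` on `A ⊕ V`, for an arbitrary pair of
actions `ρ`, `σ`; the semidirect product of the theorem takes `σ = twistedAction α β ρ φ ψ`. -/
def semidirectBracket (b : A → A → A) (ρ σ : A →ₗ[R] V →ₗ[R] V) (p q : A × V) : A × V :=
  (b p.1 q.1, ρ p.1 q.2 - σ q.1 p.2)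

theorem prodMap_semidirectBracket_iff {γ : A → A} {η : V →ₗ[R] V} :
    (∀ p q, Prod.map γ η (semidirectBracket b ρ σ p q) =
        semidirectBracket b ρ σ (Prod.map γ η p) (Prod.map γ η q)) ↔
      (∀ x y, γ (b x y) = b (γ x) (γ y)) ∧
        (∀ x v, ρ (γ x) (η v) = η (ρ x v)) ∧ ∀ x v, σ (γ x) (η v) = η (σ x v) := by
  simp only [semidirectBracket, Prod.map, Prod.mk.injEq]
  refine ⟨fun h => ⟨fun x y => (h (x, 0) (y, 0)).1, fun x v => ?_, fun y u => ?_⟩,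
    fun ⟨hb, hρ, hσ⟩ p q => ⟨hb _ _, by rw [map_sub, hρ, hσ]⟩⟩
  · simpa using (h (x, 0) (0, v)).2.symm
  · simpa using (h (0, u) (y, 0)).2.symm

theorem semidirectBracket_skew_iff {α β : A → A} {φ ψ : V →ₗ[R] V} :
    (∀ p q, semidirectBracket b ρ σ (Prod.map β ψ p) (Prod.map α φ q) =
        -semidirectBracket b ρ σ (Prod.map β ψ q) (Prod.map α φ p)) ↔
      (∀ x y, b (β x) (α y) = -b (β y) (α x)) ∧ ∀ x v, σ (α x) (ψ v) = ρ (β x) (φ v) := by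
  simp only [semidirectBracket, Prod.map, Prod.neg_mk, Prod.mk.injEq]
  refine ⟨fun h => ⟨fun x y => (h (x, 0) (y, 0)).1, fun x v => ?_⟩,
    fun ⟨hb, hσ⟩ p q => ⟨hb _ _, by rw [hσ, hσ, neg_sub]⟩⟩
  simpa using (h (x, 0) (0, v)).2.symm

theorem semidirectBracket_jacobi_iff {α β : A → A} {φ ψ : V →ₗ[R] V}
    (hσ : ∀ x v, σ (α x) (ψ v) = ρ (β x) (φ v)) :
    (∀ p q r,
        semidirectBracket b ρ σ (Prod.map β ψ (Prod.map β ψ p))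
            (semidirectBracket b ρ σ (Prod.map β ψ q) (Prod.map α φ r)) +
          semidirectBracket b ρ σ (Prod.map β ψ (Prod.map β ψ q))
            (semidirectBracket b ρ σ (Prod.map β ψ r) (Prod.map α φ p)) +
          semidirectBracket b ρ σ (Prod.map β ψ (Prod.map β ψ r))
            (semidirectBracket b ρ σ (Prod.map β ψ p) (Prod.map α φ q)) = 0) ↔
      (∀ x y z, b (β (β x)) (b (β y) (α z)) + b (β (β y)) (b (β z) (α x)) +
          b (β (β z)) (b (β x) (α y)) = 0) ∧
        ∀ x y w, σ (b (β x) (α y)) (ψ (ψ w)) =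
          ρ (β (β x)) (ρ (β y) (φ w)) - ρ (β (β y)) (ρ (β x) (φ w)) := by
  simp only [semidirectBracket, Prod.map, Prod.mk_add_mk, Prod.mk_eq_zero, hσ, map_sub]
  refine ⟨fun h => ⟨fun x y z => (h (x, 0) (y, 0) (z, 0)).1, fun x y w => ?_⟩,
    fun ⟨hb, hρσ⟩ p q r => ⟨hb _ _ _, ?_⟩⟩
  · have hw := (h (x, 0) (y, 0) (0, w)).2
    simp only [map_zero, sub_zero, zero_sub] at hw
    rw [← sub_eq_zero, ← neg_eq_zero, ← hw]
    abel
  · rw [hρσ, hρσ, hρσ]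
    abel

end Bracket

section TwistedAction

variable {R A V : Type*} [CommRing R] [AddCommGroup A] [Module R A] [AddCommGroup V] [Module R V]
variable {α : A ≃ₗ[R] A} {β : A →ₗ[R] A} {ρ : A →ₗ[R] V →ₗ[R] V}
variable {φ : V →ₗ[R] V} {ψ : V ≃ₗ[R] V}

/-- The action `(y, u) ↦ ρ(α⁻¹β(y))φψ⁻¹(u)` by which `A` acts on `V` from the right in the
semidirect product. -/
def twistedAction (α : A ≃ₗ[R] A) (β : A →ₗ[R] A) (ρ : A →ₗ[R] V →ₗ[R] V)
    (φ : V →ₗ[R] V) (ψ : V ≃ₗ[R] V) : A →ₗ[R] V →ₗ[R] V :=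
  ρ.compl₁₂ (α.symm ∘ₗ β) (φ ∘ₗ ψ.symm)

theorem twistedAction_apply (x : A) (v : V) :
    twistedAction α β ρ φ ψ x v = ρ (α.symm (β x)) (φ (ψ.symm v)) :=
  rfl

theorem twistedAction_map_map (hαβ : Function.Commute α β) (x : A) (v : V) :
    twistedAction α β ρ φ ψ (α x) (ψ v) = ρ (β x) (φ v) := by
  rw [twistedAction_apply, ← hαβ, α.symm_apply_apply, ψ.symm_apply_apply]

theorem twistedAction_equivariant {γ : A → A} {η : V → V}
    (hγα : Function.Commute γ α) (hγβ : Function.Commute γ β)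
    (hηφ : Function.Commute η φ) (hηψ : Function.Commute η ψ)
    (hρ : ∀ x v, ρ (γ x) (η v) = η (ρ x v)) (x : A) (v : V) :
    twistedAction α β ρ φ ψ (γ x) (η v) = η (twistedAction α β ρ φ ψ x v) := by
  have hγα' : Function.Commute γ α.symm :=
    hγα.inverses_right α.apply_symm_apply α.symm_apply_apply
  have hηψ' : Function.Commute η ψ.symm :=
    hηψ.inverses_right ψ.apply_symm_apply ψ.symm_apply_apply
  rw [twistedAction_apply, twistedAction_apply, ← hγβ, ← hγα', ← hηψ', ← hηφ, hρ]

theorem twistedAction_jacobi_iff {b : A → A → A} (hβ : Surjective β) (hφ : Surjective φ)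
    (hαβ : Function.Commute α β) (hφψ : Function.Commute φ ψ)
    (hαb : ∀ x y, α (b x y) = b (α x) (α y)) (hβb : ∀ x y, β (b x y) = b (β x) (β y)) :
    (∀ x y w, twistedAction α β ρ φ ψ (b (β x) (α y)) (ψ (ψ w)) =
        ρ (β (β x)) (ρ (β y) (φ w)) - ρ (β (β y)) (ρ (β x) (φ w))) ↔
      ∀ x y v, ρ (b (β x) y) (ψ v) = ρ (α (β x)) (ρ y v) - ρ (β y) (ρ (α x) v) := by
  have jacobi_iff_rep (x y : A) (w : V) :
      twistedAction α β ρ φ ψ (b (β (α x)) (α y)) (ψ (ψ w)) =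
          ρ (β (β (α x))) (ρ (β y) (φ w)) - ρ (β (β y)) (ρ (β (α x)) (φ w)) ↔
        ρ (b (β (β x)) (β y)) (ψ (φ w)) =
          ρ (α (β (β x))) (ρ (β y) (φ w)) - ρ (β (β y)) (ρ (α (β x)) (φ w)) := by
    rw [← hαβ x, ← hαb, twistedAction_map_map hαβ, hβb, hφψ, ← hαβ (β x)]
  exact ⟨fun h => hβ.forall₂.2 fun x y => hφ.forall.2 fun w =>
      (jacobi_iff_rep x y w).1 (h _ _ _),
    fun h => α.surjective.forall.2 fun x y w => (jacobi_iff_rep x y w).2 (h _ _ _)⟩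

end TwistedAction

section BiHomLie

variable {K A V : Type*} [Field K] [AddCommGroup A] [Module K A] [AddCommGroup V] [Module K V]

theorem isBilin_semidirectBracket_iff {b : A → A → A} {ρ σ : A →ₗ[K] V →ₗ[K] V} :
    IsBilin K (semidirectBracket b ρ σ) ↔ IsBilin K b := by
  refine ⟨fun h => ⟨fun y => ?_, fun x => ?_⟩, fun h => ⟨fun q => ?_, fun p => ?_⟩⟩
  · exact (LinearMap.fst K A V ∘ₗ (h.1 (y, 0)).mk' _ ∘ₗ LinearMap.inl K A V).isLinear
  · exact (LinearMap.fst K A V ∘ₗ (h.2 (x, 0)).mk' _ ∘ₗ LinearMap.inl K A V).isLinear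
  · exact (((h.1 q.1).mk' _ ∘ₗ LinearMap.fst K A V).prod
      (ρ.flip q.2 ∘ₗ LinearMap.fst K A V - σ q.1 ∘ₗ LinearMap.snd K A V)).isLinear
  · exact (((h.2 p.1).mk' _ ∘ₗ LinearMap.fst K A V).prod
      (ρ p.1 ∘ₗ LinearMap.snd K A V - σ.flip p.2 ∘ₗ LinearMap.fst K A V)).isLinear

theorem isBiHomLie_semidirectBracket_iff {b : A → A → A} {ρ σ : A →ₗ[K] V →ₗ[K] V}
    {α β : A →ₗ[K] A} {φ ψ : V →ₗ[K] V} :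
    IsBiHomLie K (semidirectBracket b ρ σ) (Prod.map α φ) (Prod.map β ψ) ↔
      IsBiHomLie K b α β ∧ (∀ v, φ (ψ v) = ψ (φ v)) ∧
        ((∀ x v, ρ (α x) (φ v) = φ (ρ x v)) ∧ ∀ x v, σ (α x) (φ v) = φ (σ x v)) ∧
        ((∀ x v, ρ (β x) (ψ v) = ψ (ρ x v)) ∧ ∀ x v, σ (β x) (ψ v) = ψ (σ x v)) ∧
        (∀ x v, σ (α x) (ψ v) = ρ (β x) (φ v)) ∧
        ∀ x y w, σ (b (β x) (α y)) (ψ (ψ w)) =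
          ρ (β (β x)) (ρ (β y) (φ w)) - ρ (β (β y)) (ρ (β x) (φ w)) := by
  have hcomm : (∀ p, Prod.map α φ (Prod.map β ψ p) = Prod.map β ψ (Prod.map α φ p)) ↔
      (∀ x, α (β x) = β (α x)) ∧ ∀ v, φ (ψ v) = ψ (φ v) := by
    simp only [Prod.map, Prod.mk.injEq]
    exact ⟨fun h => ⟨fun x => (h (x, 0)).1, fun v => (h (0, v)).2⟩, fun h p => ⟨h.1 _, h.2 _⟩⟩
  simp only [IsBiHomLie, isBilin_semidirectBracket_iff, hcomm, prodMap_semidirectBracket_iff,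
    semidirectBracket_skew_iff]
  constructor
  · rintro ⟨hbil, -, -, ⟨hαβ, hφψ⟩, ⟨hαb, hα⟩, ⟨hβb, hβ⟩, ⟨hskew, hσ⟩, hjac⟩
    obtain ⟨hbjac, hρσ⟩ := (semidirectBracket_jacobi_iff hσ).1 hjac
    exact ⟨⟨hbil, α.isLinear, β.isLinear, hαβ, hαb, hβb, hskew, hbjac⟩, hφψ, hα, hβ, hσ, hρσ⟩
  · rintro ⟨⟨hbil, -, -, hαβ, hαb, hβb, hskew, hbjac⟩, hφψ, hα, hβ, hσ, hρσ⟩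
    exact ⟨hbil, (α.prodMap φ).isLinear, (β.prodMap ψ).isLinear, ⟨hαβ, hφψ⟩, ⟨hαb, hα⟩, ⟨hβb, hβ⟩,
      ⟨hskew, hσ⟩, (semidirectBracket_jacobi_iff hσ).2 ⟨hbjac, hρσ⟩⟩

theorem biHomRep_iff_semidirect_general (b : A → A → A) (α : A ≃ₗ[K] A) (β : A →ₗ[K] A)
    (ρ : A →ₗ[K] V →ₗ[K] V) (φ : V →ₗ[K] V) (ψ : V ≃ₗ[K] V)
    (hβ : Surjective β) (hφ : Surjective φ) :
    IsBiHomLie K b α β ∧ IsBiHomRep K b α β (fun x => ρ x) φ ψ ↔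
      IsBiHomLie K (semidirectBracket b ρ (twistedAction α β ρ φ ψ))
        (Prod.map α φ) (Prod.map β ψ) := by
  refine Iff.trans (and_congr_right fun hb => ?_) (isBiHomLie_semidirectBracket_iff
    (α := (α : A →ₗ[K] A)) (ψ := (ψ : V →ₗ[K] V))).symm
  obtain ⟨-, -, -, hαβ, hαb, hβb, -, -⟩ := hb
  constructor
  · rintro ⟨-, -, hφψ, -, -, hα, hβ', hrep⟩
    exact ⟨hφψ,
      ⟨hα, twistedAction_equivariant (.refl _) hαβ (.refl _) hφψ hα⟩,
      ⟨hβ', twistedAction_equivariant (Function.Commute.symm hαβ) (.refl _)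
        (Function.Commute.symm hφψ) (.refl _) hβ'⟩,
      twistedAction_map_map hαβ, (twistedAction_jacobi_iff hβ hφ hαβ hφψ hαb hβb).2 hrep⟩
  · rintro ⟨hφψ, ⟨hα, -⟩, ⟨hβ', -⟩, -, hjac⟩
    exact ⟨φ.isLinear, ψ.toLinearMap.isLinear, hφψ, fun x => (ρ x).isLinear,
      fun v => (ρ.flip v).isLinear, hα, hβ',
      (twistedAction_jacobi_iff hβ hφ hαβ hφψ hαb hβb).1 hjac⟩

end BiHomLie

/-- semidirect product characterization of representations of a
regular BiHom-Lie algebra. -/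
theorem biHomRep_iff_semidirect {K A V : Type*} [Field K] [CharZero K]
    [AddCommGroup A] [Module K A] [AddCommGroup V] [Module K V]
    (b : A → A → A) (α β α' β' : A → A) (ρ : A → V → V) (φ ψ φ' ψ' : V → V)
    (hb : IsBiHomLie K b α β)
    (hαα' : ∀ x, α (α' x) = x) (hα'α : ∀ x, α' (α x) = x)
    (hββ' : ∀ x, β (β' x) = x) (hβ'β : ∀ x, β' (β x) = x)
    (hφ : IsLinearMap K φ) (hψ : IsLinearMap K ψ)
    (hφφ' : ∀ v, φ (φ' v) = v) (hφ'φ : ∀ v, φ' (φ v) = v)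
    (hψψ' : ∀ v, ψ (ψ' v) = v) (hψ'ψ : ∀ v, ψ' (ψ v) = v)
    (hφψ : ∀ v, φ (ψ v) = ψ (φ v))
    (hρ1 : ∀ x, IsLinearMap K (ρ x)) (hρ2 : ∀ v, IsLinearMap K fun x => ρ x v) :
    IsBiHomRep K b α β ρ φ ψ ↔
      IsBiHomLie K
        (fun p q : A × V => (b p.1 q.1, ρ p.1 q.2 - ρ (α' (β q.1)) (φ (ψ' p.2))))
        (fun p => (α p.1, φ p.2)) (fun p => (β p.1, ψ p.2)) := by
  have hα : IsLinearMap K α := hb.2.1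
  have hβ : IsLinearMap K β := hb.2.2.1
  exact (and_iff_right hb).symm.trans <| biHomRep_iff_semidirect_general b
    (Equiv.toLinearEquiv ⟨α, α', hα'α, hαα'⟩ hα) (hβ.mk' β)
    (LinearMap.mk₂ K ρ (fun x y v => (hρ2 v).map_add x y) (fun c x v => (hρ2 v).map_smul c x)
      (fun x => (hρ1 x).map_add) (fun c x => (hρ1 x).map_smul c))
    (hφ.mk' φ) (Equiv.toLinearEquiv ⟨ψ, ψ', hψ'ψ, hψψ'⟩ hψ)
    (fun x => ⟨β' x, hββ' x⟩) (fun v => ⟨φ' v, hφφ' v⟩)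
end

section
/- Let (A,[·,·],▷,α,β) be a regular BiHom-post-Lie algebra over a field K of characteristic zero. Then the bracket {x,y} = x ▷ y − α⁻¹β(y) ▷ αβ⁻¹(x) + [x,y] defines a BiHom-Lie algebra structure (A,{·,·},α,β) on A (called the sub-adjacent BiHom-Lie algebra of A). -/
/-!
Write a regular BiHom-post-Lie structure as the twist `[x, y] = ⁅α x, β y⁆`, `x ▷ y = α x ∘ β y`
of operations `⁅·, ·⁆` and `∘`, necessarily `⁅x, y⁆ = [α⁻¹ x, β⁻¹ y]` and `x ∘ y = α⁻¹ x ▷ β⁻¹ y`.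
As `α` and `β` are surjective, the BiHom axioms lose their twists: `(A, ⁅·, ·⁆, ∘)` is an ordinary
post-Lie algebra, with `α` and `β` as commuting endomorphisms. Its sub-adjacent bracket
`x ∘ y - y ∘ x + ⁅x, y⁆` is a Lie bracket, for which `∘` is a representation, and twisting that
bracket by `α` and `β` gives the bracket `{x, y}`.
-/

open Function

section Twist

section Semiconj

variable {A B : Type*} {φ : A → B} {f : A → A → A} {g : B → B → B} {α β : A → A} {γ δ : B → B}

theorem semiconj₂_bicompl (hfg : Semiconj₂ φ f g) (hα : Semiconj φ α γ) (hβ : Semiconj φ β δ) :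
    Semiconj₂ φ (bicompl f α β) (bicompl g γ δ) := fun x y => by
  simp only [bicompl, hfg.eq, hα.eq, hβ.eq]

theorem semiconj₂_of_semiconj₂_bicompl (hfg : Semiconj₂ φ (bicompl f α β) (bicompl g γ δ))
    (hα : Semiconj φ α γ) (hβ : Semiconj φ β δ) (hα_surj : Surjective α)
    (hβ_surj : Surjective β) : Semiconj₂ φ f g := by
  intro x y
  obtain ⟨x, rfl⟩ := hα_surj x
  obtain ⟨y, rfl⟩ := hβ_surj y
  simpa only [bicompl, ← hα.eq, ← hβ.eq] using hfg x y

end Semiconj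

theorem isLinearMap_of_comp_surjective {R M N P : Type*} [Semiring R]
    [AddCommMonoid M] [AddCommMonoid N] [AddCommMonoid P] [Module R M] [Module R N] [Module R P]
    {g : N → P} {π : M → N} (hgπ : IsLinearMap R fun x => g (π x)) (hπ : IsLinearMap R π)
    (hπ_surj : Surjective π) : IsLinearMap R g where
  map_add := hπ_surj.forall₂.2 fun x y => by rw [← hπ.map_add, hgπ.map_add]
  map_smul c := hπ_surj.forall.2 fun x => by rw [← hπ.map_smul, hgπ.map_smul]

variable {K A V W : Type*} [Field K] [AddCommGroup A] [Module K A]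
  [AddCommGroup V] [Module K V] [AddCommGroup W] [Module K W]
  {f : A → A → V} {α β : W → A}

theorem IsBilin.bicompl (hf : IsBilin K f) (hα : IsLinearMap K α) (hβ : IsLinearMap K β) :
    IsBilin K (bicompl f α β) :=
  ⟨fun y => (((hf.1 (β y)).mk' _).comp (hα.mk' α)).isLinear,
    fun x => (((hf.2 (α x)).mk' _).comp (hβ.mk' β)).isLinear⟩

theorem isBilin_of_bicompl (hf : IsBilin K (bicompl f α β)) (hα : IsLinearMap K α)
    (hβ : IsLinearMap K β) (hα_surj : Surjective α) (hβ_surj : Surjective β) : IsBilin K f :=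
  ⟨hβ_surj.forall.2 fun y => isLinearMap_of_comp_surjective (hf.1 y) hα hα_surj,
    hα_surj.forall.2 fun x => isLinearMap_of_comp_surjective (hf.2 x) hβ hβ_surj⟩

end Twist

section BiHom

variable {K A : Type*} [Field K] [AddCommGroup A] [Module K A]
  {b t : A → A → A} {α β : A → A}

theorem IsLieBracket.isBiHomLie_bicompl (hb : IsLieBracket K b) (hα : IsLinearMap K α)
    (hβ : IsLinearMap K β) (hαβ : Function.Commute α β) (hαb : Semiconj₂ α b b)
    (hβb : Semiconj₂ β b b) : IsBiHomLie K (bicompl b α β) α β := by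
  obtain ⟨hbilin, hskew, hjacobi⟩ := hb
  refine ⟨hbilin.bicompl hα hβ, hα, hβ, hαβ.eq,
    (semiconj₂_bicompl hαb (Function.Commute.refl α) hαβ).eq,
    (semiconj₂_bicompl hβb hαβ.symm (Function.Commute.refl β)).eq, fun x y => ?_, fun x y z => ?_⟩
  · simpa only [bicompl, hαβ.eq] using hskew (β (α x)) (β (α y))
  · simpa only [bicompl, hβb.eq, hαβ.eq] using
      hjacobi (β (β (α x))) (β (β (α y))) (β (β (α z)))

theorem IsBiHomLie.semiconj₂_of_bicompl (h : IsBiHomLie K (bicompl b α β) α β)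
    (hα_surj : Surjective α) (hβ_surj : Surjective β) :
    Semiconj₂ α b b ∧ Semiconj₂ β b b := by
  obtain ⟨-, -, -, hαβ : Function.Commute α β, hαb, hβb, -, -⟩ := h
  exact ⟨semiconj₂_of_semiconj₂_bicompl hαb (Function.Commute.refl α) hαβ hα_surj hβ_surj,
    semiconj₂_of_semiconj₂_bicompl hβb hαβ.symm (Function.Commute.refl β) hα_surj hβ_surj⟩

theorem IsBiHomLie.isLieBracket_of_bicompl (h : IsBiHomLie K (bicompl b α β) α β)
    (hα_surj : Surjective α) (hβ_surj : Surjective β) : IsLieBracket K b := by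
  obtain ⟨-, hβb⟩ := h.semiconj₂_of_bicompl hα_surj hβ_surj
  obtain ⟨hbilin, hα, hβ, hαβ : Function.Commute α β, -, -, hskew, hjacobi⟩ := h
  have hβα_surj : Surjective fun x => β (α x) := hβ_surj.comp hα_surj
  have hββα_surj : Surjective fun x => β (β (α x)) := hβ_surj.comp hβα_surj
  refine ⟨isBilin_of_bicompl hbilin hα hβ hα_surj hβ_surj, ?_, ?_⟩
  · refine hβα_surj.forall₂.2 fun x y => ?_
    simpa only [bicompl, hαβ.eq] using hskew x y
  · refine hββα_surj.forall₃.2 fun x y z => ?_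
    simpa only [bicompl, hβb.eq, hαβ.eq] using hjacobi x y z

theorem IsBiHomPostLie.semiconj₂_of_bicompl
    (h : IsBiHomPostLie K (bicompl b α β) (bicompl t α β) α β)
    (hα_surj : Surjective α) (hβ_surj : Surjective β) :
    Semiconj₂ α t t ∧ Semiconj₂ β t t := by
  obtain ⟨⟨-, -, -, hαβ : Function.Commute α β, -⟩, -, hαt, hβt, -, -⟩ := h
  exact ⟨semiconj₂_of_semiconj₂_bicompl hαt (Function.Commute.refl α) hαβ hα_surj hβ_surj,
    semiconj₂_of_semiconj₂_bicompl hβt hαβ.symm (Function.Commute.refl β) hα_surj hβ_surj⟩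

theorem IsBiHomPostLie.isPostLie_of_bicompl
    (h : IsBiHomPostLie K (bicompl b α β) (bicompl t α β) α β)
    (hα_surj : Surjective α) (hβ_surj : Surjective β) : IsPostLie K b t := by
  obtain ⟨hαb, hβb⟩ := h.1.semiconj₂_of_bicompl hα_surj hβ_surj
  obtain ⟨hαt, hβt⟩ := h.semiconj₂_of_bicompl hα_surj hβ_surj
  obtain ⟨hLie, ht, -, -, hderiv, hassoc⟩ := h
  have hb : IsLieBracket K b := hLie.isLieBracket_of_bicompl hα_surj hβ_surj
  obtain ⟨-, hα, hβ, hαβ : Function.Commute α β, -⟩ := hLie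
  have hβα_surj : Surjective fun x => β (α x) := hβ_surj.comp hα_surj
  have hβαα_surj : Surjective fun x => β (α (α x)) := hβα_surj.comp hα_surj
  have hββ_surj : Surjective fun x => β (β x) := hβ_surj.comp hβ_surj
  refine ⟨hb, isBilin_of_bicompl ht hα hβ hα_surj hβ_surj, ?_, ?_⟩
  · refine hβαα_surj.forall.2 fun x => hβα_surj.forall.2 fun y => hββ_surj.forall.2 fun z => ?_
    simpa only [bicompl, hαt.eq, hβt.eq, hβb.eq, hαβ.eq] using hderiv x y z
  · refine hβαα_surj.forall₂.2 fun x y => hββ_surj.forall.2 fun z => ?_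
    simpa only [bicompl, hαb.eq, hαt.eq, hβt.eq, hαβ.eq] using hassoc x y z

end BiHom

section SubAdjacent

variable {K A : Type*} [Field K] [AddCommGroup A] [Module K A] {b t : A → A → A}

/-- The bracket `{x, y} = x ▷ y - y ▷ x + [x, y]` of the sub-adjacent Lie algebra of a post-Lie
algebra `(A, b, t)`, where `b` is `[·, ·]` and `t` is `▷`. -/
def subAdjacentBracket (b t : A → A → A) (x y : A) : A :=
  t x y - t y x + b x y

theorem semiconj₂_subAdjacentBracket {B : Type*} [AddCommGroup B] [Module K B]
    {c u : B → B → B} {φ : A → B} (hφ : IsLinearMap K φ) (hbc : Semiconj₂ φ b c)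
    (htu : Semiconj₂ φ t u) : Semiconj₂ φ (subAdjacentBracket b t) (subAdjacentBracket c u) :=
  fun x y => by simp only [subAdjacentBracket, hφ.map_add, hφ.map_sub, hbc.eq, htu.eq]

theorem IsBilin.subAdjacentBracket (hb : IsBilin K b) (ht : IsBilin K t) :
    IsBilin K (subAdjacentBracket b t) :=
  ⟨fun y => (((ht.1 y).mk' _ - (ht.2 y).mk' _) + (hb.1 y).mk' _).isLinear,
    fun x => (((ht.2 x).mk' _ - (ht.1 x).mk' _) + (hb.2 x).mk' _).isLinear⟩

theorem IsPostLie.isLieRep_subAdjacentBracket (h : IsPostLie K b t) :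
    IsLieRep K (subAdjacentBracket b t) t := by
  obtain ⟨-, ht, -, hassoc⟩ := h
  refine ⟨ht.2, ht.1, fun x y z => ?_⟩
  simp only [subAdjacentBracket, (ht.1 z).map_add, (ht.1 z).map_sub, hassoc]
  abel

theorem IsPostLie.subAdjacentBracket_subAdjacentBracket (h : IsPostLie K b t) (x y z : A) :
    subAdjacentBracket b t x (subAdjacentBracket b t y z) =
      (t x (t y z) - t x (t z y) - t y (t z x) + t z (t y x)) +
        (b x (t y z) - b x (t z y) + b y (t x z) - b z (t x y)) + b x (b y z) := by
  obtain ⟨-, -, t_subAdjacentBracket⟩ := h.isLieRep_subAdjacentBracket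
  obtain ⟨⟨hb, hskew, -⟩, ht, hderiv, -⟩ := h
  have t_right : t x (subAdjacentBracket b t y z) =
      t x (t y z) - t x (t z y) + (b y (t x z) - b z (t x y)) := by
    simp only [subAdjacentBracket, (ht.2 x).map_add, (ht.2 x).map_sub, hderiv, hskew (t x y) z]
    abel
  have b_right : b x (subAdjacentBracket b t y z) =
      b x (t y z) - b x (t z y) + b x (b y z) := by
    simp only [subAdjacentBracket, (hb.2 x).map_add, (hb.2 x).map_sub]
  rw [subAdjacentBracket, t_right, b_right, t_subAdjacentBracket]
  abel

theorem IsPostLie.isLieBracket_subAdjacentBracket (h : IsPostLie K b t) :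
    IsLieBracket K (subAdjacentBracket b t) := by
  obtain ⟨hbilin, hskew, hjacobi⟩ := h.1
  refine ⟨hbilin.subAdjacentBracket h.2.1, fun x y => ?_, fun x y z => ?_⟩
  · rw [subAdjacentBracket, subAdjacentBracket, hskew x y]
    abel
  · simp only [h.subAdjacentBracket_subAdjacentBracket]
    rw [← hjacobi x y z]
    abel

theorem IsBiHomPostLie.isBiHomLie_bicompl_subAdjacentBracket {α β : A → A}
    (h : IsBiHomPostLie K (bicompl b α β) (bicompl t α β) α β)
    (hα_surj : Surjective α) (hβ_surj : Surjective β) :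
    IsBiHomLie K (bicompl (subAdjacentBracket b t) α β) α β := by
  have hpost : IsPostLie K b t := h.isPostLie_of_bicompl hα_surj hβ_surj
  obtain ⟨hαb, hβb⟩ := h.1.semiconj₂_of_bicompl hα_surj hβ_surj
  obtain ⟨hαt, hβt⟩ := h.semiconj₂_of_bicompl hα_surj hβ_surj
  obtain ⟨-, hα, hβ, hαβ, -⟩ := h.1
  exact hpost.isLieBracket_subAdjacentBracket.isBiHomLie_bicompl hα hβ hαβ
    (semiconj₂_subAdjacentBracket hα hαb hαt) (semiconj₂_subAdjacentBracket hβ hβb hβt)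

theorem subAdjacent_of_biHomPostLie_general {α β α' β' : A → A} (h : IsBiHomPostLie K b t α β)
    (hαα' : ∀ x, α (α' x) = x) (hα'α : ∀ x, α' (α x) = x)
    (hββ' : ∀ x, β (β' x) = x) (hβ'β : ∀ x, β' (β x) = x) :
    IsBiHomLie K (fun x y => t x y - t (α' (β y)) (α (β' x)) + b x y) α β := by
  have bicompl_untwist (f : A → A → A) : bicompl (bicompl f α' β') α β = f := by
    funext x y
    simp only [bicompl, hα'α, hβ'β]
  have hαβ : Function.Commute α β := h.1.2.2.2.1
  have hαβ' : Function.Commute α β' := hαβ.inverses_right hββ' hβ'β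
  have bracket_eq : (fun x y => t x y - t (α' (β y)) (α (β' x)) + b x y) =
      bicompl (subAdjacentBracket (bicompl b α' β') (bicompl t α' β')) α β := by
    funext x y
    simp only [subAdjacentBracket, bicompl, hα'α, hβ'β, hαβ'.eq]
  rw [bracket_eq]
  refine IsBiHomPostLie.isBiHomLie_bicompl_subAdjacentBracket ?_
    (RightInverse.surjective hαα') (RightInverse.surjective hββ')
  simpa only [bicompl_untwist] using h

end SubAdjacent

/-- the sub-adjacent BiHom-Lie algebra of a regular
BiHom-post-Lie algebra. -/
theorem subAdjacent_of_biHomPostLie {K A : Type*} [Field K] [CharZero K]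
    [AddCommGroup A] [Module K A] (b t : A → A → A) (α β α' β' : A → A)
    (h : IsBiHomPostLie K b t α β)
    (hαα' : ∀ x, α (α' x) = x) (hα'α : ∀ x, α' (α x) = x)
    (hββ' : ∀ x, β (β' x) = x) (hβ'β : ∀ x, β' (β x) = x) :
    IsBiHomLie K (fun x y => t x y - t (α' (β y)) (α (β' x)) + b x y) α β :=
  subAdjacent_of_biHomPostLie_general h hαα' hα'α hββ' hβ'β
end

section
/- Let (A,≺,≻,·,α,β) be a regular BiHom-tri-dendriform algebra over a field K of characteristic zero. Define [x,y] = x·y − α⁻¹β(y)·αβ⁻¹(x) and x ▷ y = x ≻ y − α⁻¹β(y) ≺ αβ⁻¹(x) for all x,y ∈ A. Then (A,[·,·],▷,α,β) is a BiHom-post-Lie algebra. -/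
/-- `(A, p, s, m, α, β)` is a BiHom-tri-dendriform algebra, where `p = ≺`,
`s = ≻` and `m = ·`. -/
def IsBiHomTriDendriform {K A : Type*} [Field K] [AddCommGroup A] [Module K A]
    (p s m : A → A → A) (α β : A → A) : Prop :=
  IsBilin K p ∧ IsBilin K s ∧ IsBilin K m ∧
    IsLinearMap K α ∧ IsLinearMap K β ∧
    (∀ x, α (β x) = β (α x)) ∧
    (∀ x y, α (p x y) = p (α x) (α y)) ∧
    (∀ x y, α (s x y) = s (α x) (α y)) ∧
    (∀ x y, α (m x y) = m (α x) (α y)) ∧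
    (∀ x y, β (p x y) = p (β x) (β y)) ∧
    (∀ x y, β (s x y) = s (β x) (β y)) ∧
    (∀ x y, β (m x y) = m (β x) (β y)) ∧
    (∀ x y z, p (p x y) (β z) = p (α x) (p y z + s y z + m y z)) ∧
    (∀ x y z, p (s x y) (β z) = s (α x) (p y z)) ∧
    (∀ x y z, s (α x) (s y z) = s (p x y + s x y + m x y) (β z)) ∧
    (∀ x y z, m (α x) (s y z) = m (p x y) (β z)) ∧
    (∀ x y z, s (α x) (m y z) = m (s x y) (β z)) ∧
    (∀ x y z, m (α x) (p y z) = p (m x y) (β z)) ∧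
    (∀ x y z, m (α x) (m y z) = m (m x y) (β z))

/-!
Regularity lets one undo the twist by `α` and `β`: the operations `p (α' x) (β' y)`,
`s (α' x) (β' y)` and `m (α' x) (β' y)` form an ordinary tri-dendriform algebra. There `m` is
associative, and the left action `≻` and the right action `≺` make `A` a bimodule over
`x ∗ y = x ≺ y + x ≻ y + x · y`. Hence `x ▷ y = x ≻ y - y ≺ x` represents the commutator of `∗`
and acts by derivations of the commutator `[·, ·]` of `m`; as
`x ▷ y - y ▷ x + [x, y] = x ∗ y - y ∗ x`, this is a post-Lie algebra. The maps `α` and `β` are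
endomorphisms of it, and its twist by them is the required BiHom-post-Lie algebra.
-/

open Function

section Operations

variable {A B V : Type*}

/-- The Yau twist `(x, y) ↦ f (a x) (b y)` of a binary operation `f`. Twisting by `α, β` turns
ordinary algebras into BiHom-algebras; twisting by their inverses goes back. -/
def yauTwist (a b : A → A) (f : A → A → V) (x y : A) : V := f (a x) (b y)

/-- The difference of `f` and the opposite of `g`. It covers both operations of a post-Lie algebra
obtained from a tri-dendriform one: `[x, y] = x · y - y · x` is `subFlip m m`, and
`x ▷ y = x ≻ y - y ≺ x` is `subFlip s p`. -/
def subFlip [Sub V] (f g : A → A → V) (x y : A) : V := f x y - g y x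

/-- The total product `x ∗ y = x ≺ y + x ≻ y + x · y` of a tri-dendriform algebra. -/
def totalProduct [Add A] (p s m : A → A → A) (x y : A) : A := p x y + s x y + m x y

theorem subFlip_totalProduct_self [AddCommGroup A] (p s m : A → A → A) (x y : A) :
    subFlip (totalProduct p s m) (totalProduct p s m) x y =
      subFlip m m x y + subFlip s p x y - subFlip s p y x := by
  simp only [subFlip, totalProduct]
  abel

theorem semiconj₂_of_inverse {f : A → A → A} {g : B → B → B} {a : A → B} {a' : B → A}
    (hf : Semiconj₂ a f g) (hl : LeftInverse a' a) (hr : RightInverse a' a) :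
    Semiconj₂ a' g f := fun x y => by
  rw [← hl (f (a' x) (a' y)), hf.eq, hr, hr]

theorem semiconj₂_yauTwist {f : A → A → A} {a b c : A → A} (hf : Semiconj₂ c f f)
    (ha : Function.Commute c a) (hb : Function.Commute c b) :
    Semiconj₂ c (yauTwist a b f) (yauTwist a b f) := fun x y => by
  simp only [yauTwist, hf.eq, ha x, hb y]

theorem yauTwist_subFlip_yauTwist [Sub V] {α β α' β' : A → A} (f g : A → A → V)
    (hα : LeftInverse α' α) (hβ : LeftInverse β' β) (hαβ' : Function.Commute α β') :
    yauTwist α β (subFlip (yauTwist α' β' f) (yauTwist α' β' g)) =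
      fun x y => f x y - g (α' (β y)) (α (β' x)) := by
  funext x y
  simp only [yauTwist, subFlip, hα x, hβ y, hαβ' x]

theorem yauTwist_inverse_assoc {f g f' g' : A → A → A} {α β α' β' : A → A}
    (h : ∀ x y z, f (α x) (g y z) = f' (g' x y) (β z))
    (hα : RightInverse α' α) (hβ : RightInverse β' β) (hαβ : Function.Commute α' β')
    (hg : Semiconj₂ β' g g) (hg' : Semiconj₂ α' g' g') (x y z : A) :
    yauTwist α' β' f x (yauTwist α' β' g y z) = yauTwist α' β' f' (yauTwist α' β' g' x y) z := by
  have twisted := h (α' (α' x)) (α' (β' y)) (β' (β' z))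
  rw [hα, hβ] at twisted
  simp only [yauTwist, hg.eq, hg'.eq, ← hαβ y, twisted]

end Operations

section Linear

variable {K A V : Type*} [Field K] [AddCommGroup A] [Module K A] [AddCommGroup V] [Module K V]

theorem isLinearMap_of_inverse {a : A → V} {a' : V → A} (ha : IsLinearMap K a)
    (hl : LeftInverse a' a) (hr : RightInverse a' a) : IsLinearMap K a' :=
  ((ha.mk' a).inverse a' hl hr).isLinear

theorem semiconj₂_subFlip {f g : A → A → A} {c : A → A} (hc : IsLinearMap K c)
    (hf : Semiconj₂ c f f) (hg : Semiconj₂ c g g) :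
    Semiconj₂ c (subFlip f g) (subFlip f g) := fun x y => by
  simp only [subFlip, hc.map_sub, hf.eq, hg.eq]

theorem semiconj₂_totalProduct {p s m : A → A → A} {c : A → A} (hc : IsLinearMap K c)
    (hp : Semiconj₂ c p p) (hs : Semiconj₂ c s s) (hm : Semiconj₂ c m m) :
    Semiconj₂ c (totalProduct p s m) (totalProduct p s m) := fun x y => by
  simp only [totalProduct, hc.map_add, hp.eq, hs.eq, hm.eq]

namespace IsBilin

variable {f g : A → A → V}

theorem add_left (hf : IsBilin K f) (x y z : A) : f (x + y) z = f x z + f y z :=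
  (hf.1 z).map_add x y

theorem sub_left (hf : IsBilin K f) (x y z : A) : f (x - y) z = f x z - f y z :=
  (hf.1 z).map_sub x y

theorem sub_right (hf : IsBilin K f) (x y z : A) : f x (y - z) = f x y - f x z :=
  (hf.2 x).map_sub y z

protected theorem subFlip (hf : IsBilin K f) (hg : IsBilin K g) : IsBilin K (subFlip f g) :=
  ⟨fun y => ((hf.1 y).mk' _ - (hg.2 y).mk' _).isLinear,
    fun x => ((hf.2 x).mk' _ - (hg.1 x).mk' _).isLinear⟩

protected theorem yauTwist (hf : IsBilin K f) {a b : A → A} (ha : IsLinearMap K a)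
    (hb : IsLinearMap K b) : IsBilin K (yauTwist a b f) :=
  ⟨fun y => ((hf.1 (b y)).mk' _ ∘ₗ ha.mk' a).isLinear,
    fun x => ((hf.2 (a x)).mk' _ ∘ₗ hb.mk' b).isLinear⟩

end IsBilin

theorem isLieBracket_subFlip_self {m : A → A → A} (hm : IsBilin K m)
    (hassoc : ∀ x y z, m x (m y z) = m (m x y) z) : IsLieBracket K (subFlip m m) := by
  refine ⟨hm.subFlip hm, fun x y => (neg_sub _ _).symm, fun x y z => ?_⟩
  simp only [subFlip, hm.sub_left, hm.sub_right, hassoc]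
  abel

variable (K) in
/-- Tri-dendriform algebras, with `p = ≺`, `s = ≻` and `m = ·`. Every law is oriented as
`x ∘₁ (y ∘₂ z) = (x ∘₃ y) ∘₄ z`. -/
structure IsTriDendriform (p s m : A → A → A) : Prop where
  isBilin_prec : IsBilin K p
  isBilin_succ : IsBilin K s
  isBilin_mul : IsBilin K m
  prec_total : ∀ x y z, p x (totalProduct p s m y z) = p (p x y) z
  succ_prec : ∀ x y z, s x (p y z) = p (s x y) z
  succ_succ : ∀ x y z, s x (s y z) = s (totalProduct p s m x y) z
  mul_succ : ∀ x y z, m x (s y z) = m (p x y) z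
  succ_mul : ∀ x y z, s x (m y z) = m (s x y) z
  mul_prec : ∀ x y z, m x (p y z) = p (m x y) z
  mul_mul : ∀ x y z, m x (m y z) = m (m x y) z

namespace IsTriDendriform

variable {p s m : A → A → A}

theorem subFlip_leibniz (h : IsTriDendriform K p s m) (x y z : A) :
    subFlip s p x (subFlip m m y z) =
      subFlip m m (subFlip s p x y) z + subFlip m m y (subFlip s p x z) := by
  simp only [subFlip, h.isBilin_prec.sub_left, h.isBilin_succ.sub_right, h.isBilin_mul.sub_left,
    h.isBilin_mul.sub_right, h.mul_succ, h.succ_mul, h.mul_prec]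
  abel

theorem subFlip_subFlip_totalProduct (h : IsTriDendriform K p s m) (x y z : A) :
    subFlip s p (subFlip (totalProduct p s m) (totalProduct p s m) x y) z =
      subFlip s p x (subFlip s p y z) - subFlip s p y (subFlip s p x z) := by
  simp only [subFlip, h.isBilin_prec.sub_left, h.isBilin_prec.sub_right, h.isBilin_succ.sub_left,
    h.isBilin_succ.sub_right, h.prec_total, h.succ_prec, h.succ_succ]
  abel

theorem isPostLie (h : IsTriDendriform K p s m) : IsPostLie K (subFlip m m) (subFlip s p) := by
  have ht := h.isBilin_succ.subFlip h.isBilin_prec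
  refine ⟨isLieBracket_subFlip_self h.isBilin_mul h.mul_mul, ht, h.subFlip_leibniz,
    fun x y z => ?_⟩
  have action := h.subFlip_subFlip_totalProduct x y z
  rw [subFlip_totalProduct_self, ht.sub_left, ht.add_left] at action
  rw [sub_sub_sub_comm, ← action]
  abel

end IsTriDendriform

protected theorem IsPostLie.yauTwist {b t : A → A → A} {α β : A → A} (h : IsPostLie K b t)
    (hα : IsLinearMap K α) (hβ : IsLinearMap K β) (hαβ : ∀ x, α (β x) = β (α x))
    (hαb : Semiconj₂ α b b) (hβb : Semiconj₂ β b b)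
    (hαt : Semiconj₂ α t t) (hβt : Semiconj₂ β t t) :
    IsBiHomPostLie K (yauTwist α β b) (yauTwist α β t) α β := by
  obtain ⟨⟨hb, skew, jacobi⟩, ht, leibniz, action⟩ := h
  refine ⟨⟨hb.yauTwist hα hβ, hα, hβ, hαβ, semiconj₂_yauTwist hαb (.refl α) hαβ,
      semiconj₂_yauTwist hβb (fun x => (hαβ x).symm) (.refl β), fun x y => ?_, fun x y z => ?_⟩,
    ht.yauTwist hα hβ, semiconj₂_yauTwist hαt (.refl α) hαβ,
    semiconj₂_yauTwist hβt (fun x => (hαβ x).symm) (.refl β), fun x y z => ?_, fun x y z => ?_⟩ <;>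
  simp only [yauTwist, hαb.eq, hβb.eq, hαt.eq, hβt.eq, hαβ]
  · exact skew _ _
  · exact jacobi _ _ _
  · exact leibniz _ _ _
  · exact action _ _ _

theorem IsBiHomTriDendriform.isTriDendriform_yauTwist_inverse {p s m : A → A → A}
    {α β α' β' : A → A} (h : IsBiHomTriDendriform (K := K) p s m α β)
    (hα_left : LeftInverse α' α) (hα_right : RightInverse α' α)
    (hβ_left : LeftInverse β' β) (hβ_right : RightInverse β' β) :
    IsTriDendriform K (yauTwist α' β' p) (yauTwist α' β' s) (yauTwist α' β' m) := by
  obtain ⟨hp, hs, hm, hα, hβ, hαβ, hαp, hαs, hαm, hβp, hβs, hβm,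
    prec_prec, succ_prec, succ_succ, mul_succ, succ_mul, mul_prec, mul_mul⟩ := h
  have hα' := isLinearMap_of_inverse hα hα_left hα_right
  have hβ' := isLinearMap_of_inverse hβ hβ_left hβ_right
  have hαβ' : Function.Commute α β' := Semiconj.inverses_right hαβ hβ_right hβ_left
  have hα'β' : Function.Commute α' β' :=
    (Semiconj.inverses_right hαβ'.symm hα_right hα_left).commute.symm
  have hα'p := semiconj₂_of_inverse hαp hα_left hα_right
  have hα's := semiconj₂_of_inverse hαs hα_left hα_right
  have hα'm := semiconj₂_of_inverse hαm hα_left hα_right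
  have hβ'p := semiconj₂_of_inverse hβp hβ_left hβ_right
  have hβ's := semiconj₂_of_inverse hβs hβ_left hβ_right
  have hβ'm := semiconj₂_of_inverse hβm hβ_left hβ_right
  have hα'total := semiconj₂_totalProduct hα' hα'p hα's hα'm
  have hβ'total := semiconj₂_totalProduct hβ' hβ'p hβ's hβ'm
  exact
    { isBilin_prec := hp.yauTwist hα' hβ'
      isBilin_succ := hs.yauTwist hα' hβ'
      isBilin_mul := hm.yauTwist hα' hβ'
      prec_total := yauTwist_inverse_assoc (g := totalProduct p s m)
        (fun x y z => (prec_prec x y z).symm) hα_right hβ_right hα'β' hβ'total hα'p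
      succ_prec := yauTwist_inverse_assoc
        (fun x y z => (succ_prec x y z).symm) hα_right hβ_right hα'β' hβ'p hα's
      succ_succ := yauTwist_inverse_assoc (g' := totalProduct p s m)
        succ_succ hα_right hβ_right hα'β' hβ's hα'total
      mul_succ := yauTwist_inverse_assoc mul_succ hα_right hβ_right hα'β' hβ's hα'p
      succ_mul := yauTwist_inverse_assoc succ_mul hα_right hβ_right hα'β' hβ'm hα's
      mul_prec := yauTwist_inverse_assoc mul_prec hα_right hβ_right hα'β' hβ'p hα'm
      mul_mul := yauTwist_inverse_assoc mul_mul hα_right hβ_right hα'β' hβ'm hα'm }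

theorem biHomPostLie_of_biHomTriDendriform_general {p s m : A → A → A} {α β α' β' : A → A}
    (h : IsBiHomTriDendriform (K := K) p s m α β)
    (hα_left : LeftInverse α' α) (hα_right : RightInverse α' α)
    (hβ_left : LeftInverse β' β) (hβ_right : RightInverse β' β) :
    IsBiHomPostLie K (fun x y => m x y - m (α' (β y)) (α (β' x)))
      (fun x y => s x y - p (α' (β y)) (α (β' x))) α β := by
  have hpost := (h.isTriDendriform_yauTwist_inverse hα_left hα_right hβ_left hβ_right).isPostLie
  obtain ⟨-, -, -, hα, hβ, hαβ, hαp, hαs, hαm, hβp, hβs, hβm, -⟩ := h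
  have hαα' : Function.Commute α α' := fun x => (hα_right x).trans (hα_left x).symm
  have hββ' : Function.Commute β β' := fun x => (hβ_right x).trans (hβ_left x).symm
  have hαβ' : Function.Commute α β' := Semiconj.inverses_right hαβ hβ_right hβ_left
  have hβα' : Function.Commute β α' :=
    Semiconj.inverses_right (fun x => (hαβ x).symm) hα_right hα_left
  rw [← yauTwist_subFlip_yauTwist m m hα_left hβ_left hαβ',
    ← yauTwist_subFlip_yauTwist s p hα_left hβ_left hαβ']
  exact hpost.yauTwist hα hβ hαβ
    (semiconj₂_subFlip hα (semiconj₂_yauTwist hαm hαα' hαβ') (semiconj₂_yauTwist hαm hαα' hαβ'))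
    (semiconj₂_subFlip hβ (semiconj₂_yauTwist hβm hβα' hββ') (semiconj₂_yauTwist hβm hβα' hββ'))
    (semiconj₂_subFlip hα (semiconj₂_yauTwist hαs hαα' hαβ') (semiconj₂_yauTwist hαp hαα' hαβ'))
    (semiconj₂_subFlip hβ (semiconj₂_yauTwist hβs hβα' hββ') (semiconj₂_yauTwist hβp hβα' hββ'))

end Linear

/-- a regular BiHom-tri-dendriform algebra gives a
BiHom-post-Lie algebra. -/
theorem biHomPostLie_of_biHomTriDendriform {K A : Type*} [Field K] [CharZero K]
    [AddCommGroup A] [Module K A] (p s m : A → A → A) (α β α' β' : A → A)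
    (h : IsBiHomTriDendriform (K := K) p s m α β)
    (hαα' : ∀ x, α (α' x) = x) (hα'α : ∀ x, α' (α x) = x)
    (hββ' : ∀ x, β (β' x) = x) (hβ'β : ∀ x, β' (β x) = x) :
    IsBiHomPostLie K (fun x y => m x y - m (α' (β y)) (α (β' x)))
      (fun x y => s x y - p (α' (β y)) (α (β' x))) α β :=
  biHomPostLie_of_biHomTriDendriform_general h hα'α hαα' hβ'β hββ'
end
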